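/- Let H be a complex Hilbert space and S : dom(S) ⊆ H → H a densely defined skew-selfadjoint operator such that the embedding dom(S) ↪ H is compact (every sequence (xₙ) in dom(S) with (‖xₙ‖) and (‖S xₙ‖) bounded has a subsequence converging in H). Then S is a Fredholm operator of index zero: ran(S) is closed, ker(S) is finite-dimensional, the cokernel H / ran(S) is finite-dimensional, and dim ker(S) = dim (H / ran(S)) (equivalently dim ker(S) = dim ran(S)^⊥). -/

import Mathlib

noncomputable section

open LinearPMap
open scoped ComplexInnerProductSpace

/-- The range of a partially defined linear operator, as a submodule. -/
def ranSub {E F : Type*} [NormedAddCommGroup E] [NormedAddCommGroup F]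
    [InnerProductSpace ℂ E] [InnerProductSpace ℂ F] (S : E →ₗ.[ℂ] F) : Submodule ℂ F :=
  LinearMap.range S.toFun

/-- The kernel of a partially defined linear operator, as a submodule of the ambient space. -/
def kerSub {E F : Type*} [NormedAddCommGroup E] [NormedAddCommGroup F]
    [InnerProductSpace ℂ E] [InnerProductSpace ℂ F] (S : E →ₗ.[ℂ] F) : Submodule ℂ E :=
  (LinearMap.ker S.toFun).map S.domain.subtype

/-- Membership in the kernel, elementwise. -/
theorem mem_kerSub_aux {H : Type*} [NormedAddCommGroup H] [InnerProductSpace ℂ H]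
    (S : H →ₗ.[ℂ] H) (y : H) : y ∈ kerSub S ↔ ∃ h : y ∈ S.domain, S ⟨y, h⟩ = 0 := by
  constructor
  · rintro ⟨⟨z, hz⟩, h, rfl⟩
    exact ⟨hz, h⟩
  · rintro ⟨h, h0⟩
    exact ⟨⟨y, h⟩, h0, rfl⟩

/-- Skew symmetry. -/
theorem skew_symm_aux {H : Type*} [NormedAddCommGroup H] [InnerProductSpace ℂ H]
    [CompleteSpace H] (S : H →ₗ.[ℂ] H)
    (hdense : Dense (S.domain : Set H)) (hskew : S.adjoint = -S) (x y : S.domain) :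
    inner ℂ (-(S x)) (y : H) = inner ℂ (x : H) (S y) := by
  have h := LinearPMap.adjoint_isFormalAdjoint hdense
  rw [hskew] at h
  exact h x y

/-- Maximality. -/
theorem skew_max_aux {H : Type*} [NormedAddCommGroup H] [InnerProductSpace ℂ H]
    [CompleteSpace H] (S : H →ₗ.[ℂ] H)
    (hdense : Dense (S.domain : Set H)) (hskew : S.adjoint = -S) (x w : H)
    (h : ∀ z : S.domain, inner ℂ (-w) (z : H) = inner ℂ x (S z)) :
    ∃ hx : x ∈ S.domain, S ⟨x, hx⟩ = w := by
  have hx : x ∈ S.adjoint.domain := LinearPMap.mem_adjoint_domain_of_exists x ⟨-w, h⟩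
  have hx' : x ∈ S.domain := by rw [hskew] at hx; exact hx
  refine ⟨hx', hdense.eq_of_inner_left ℂ fun v hv => ?_⟩
  have h1 := skew_symm_aux S hdense hskew ⟨x, hx'⟩ ⟨v, hv⟩
  have h2 := h ⟨v, hv⟩
  rw [← h1, inner_neg_left, inner_neg_left] at h2
  exact (neg_injective h2).symm

/-- The graph is sequentially closed. -/
theorem graph_closed_aux {H : Type*} [NormedAddCommGroup H] [InnerProductSpace ℂ H]
    [CompleteSpace H] (S : H →ₗ.[ℂ] H)
    (hdense : Dense (S.domain : Set H)) (hskew : S.adjoint = -S)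
    (u : ℕ → S.domain) (x w : H)
    (hu : Filter.Tendsto (fun n => (u n : H)) Filter.atTop (nhds x))
    (hw : Filter.Tendsto (fun n => S (u n)) Filter.atTop (nhds w)) :
    ∃ hx : x ∈ S.domain, S ⟨x, hx⟩ = w := by
  refine skew_max_aux S hdense hskew x w fun z => ?_
  have h1 : Filter.Tendsto (fun n => inner ℂ (-(S (u n))) (z : H)) Filter.atTop
      (nhds (inner ℂ (-w) (z : H))) := hw.neg.inner tendsto_const_nhds
  have h2 : Filter.Tendsto (fun n => inner ℂ (u n : H) (S z)) Filter.atTop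
      (nhds (inner ℂ x (S z))) := hu.inner tendsto_const_nhds
  refine tendsto_nhds_unique h1 (h2.congr fun n => ?_)
  exact (skew_symm_aux S hdense hskew (u n) z).symm

/-- The kernel is the orthogonal complement of the range. -/
theorem ker_eq_aux {H : Type*} [NormedAddCommGroup H] [InnerProductSpace ℂ H]
    [CompleteSpace H] (S : H →ₗ.[ℂ] H)
    (hdense : Dense (S.domain : Set H)) (hskew : S.adjoint = -S) :
    kerSub S = (ranSub S)ᗮ := by
  ext y
  rw [mem_kerSub_aux, Submodule.mem_orthogonal']
  constructor
  · rintro ⟨hy, h0⟩ _ ⟨z, rfl⟩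
    have := skew_symm_aux S hdense hskew ⟨y, hy⟩ z
    rw [h0] at this
    simpa using this.symm
  · intro h
    refine skew_max_aux S hdense hskew y 0 fun z => ?_
    have := h (S z) ⟨z, rfl⟩
    simp [this]

/-- The a priori estimate on the complement of the kernel. -/
theorem bound_aux {H : Type*} [NormedAddCommGroup H] [InnerProductSpace ℂ H]
    [CompleteSpace H] (S : H →ₗ.[ℂ] H)
    (hdense : Dense (S.domain : Set H)) (hskew : S.adjoint = -S)
    (hcomp : ∀ (x : ℕ → H) (hx : ∀ n, x n ∈ S.domain),
      (∃ C, ∀ n, ‖x n‖ ≤ C) → (∃ C, ∀ n, ‖S ⟨x n, hx n⟩‖ ≤ C) →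
      ∃ φ : ℕ → ℕ, StrictMono φ ∧
        ∃ l : H, Filter.Tendsto (fun n => x (φ n)) Filter.atTop (nhds l)) :
    ∃ c : ℝ, 0 < c ∧ ∀ x : S.domain, (x : H) ∈ (kerSub S)ᗮ → ‖(x : H)‖ ≤ c * ‖S x‖ := by
  by_contra! hcon
  choose v hv hlt using fun n : ℕ => hcon ((n : ℝ) + 1) (by positivity)
  have hpos : ∀ n, 0 < ‖(v n : H)‖ := fun n => lt_of_le_of_lt (by positivity) (hlt n)
  let u : ℕ → S.domain := fun n => ((‖(v n : H)‖⁻¹ : ℝ) : ℂ) • v n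
  have hun : ∀ n, ‖(u n : H)‖ = 1 := fun n => by
    have := (hpos n).ne'
    simp only [u, Submodule.coe_smul, norm_smul, Complex.norm_real, norm_inv, norm_norm]
    exact inv_mul_cancel₀ this
  have hSu : ∀ n, ‖S (u n)‖ ≤ 1 / ((n : ℝ) + 1) := fun n => by
    have h1 := hpos n
    have h2 := (hlt n).le
    have h3 : ‖S (u n)‖ = ‖(v n : H)‖⁻¹ * ‖S (v n)‖ := by
      simp only [u, LinearPMap.map_smul, norm_smul, Complex.norm_real, norm_inv, norm_norm]
    rw [h3, inv_mul_eq_div, div_le_div_iff₀ h1 (by positivity)]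
    linarith
  have hu : ∀ n, (u n : H) ∈ (kerSub S)ᗮ := fun n => Submodule.smul_mem _ _ (hv n)
  obtain ⟨φ, hφ, l, hl⟩ := hcomp (fun n => (u n : H)) (fun n => (u n).2)
    ⟨1, fun n => (hun n).le⟩ ⟨1, fun n => (hSu n).trans (by
      rw [div_le_one (by positivity)]; linarith [n.cast_nonneg (α := ℝ)])⟩
  have hS0 : Filter.Tendsto (fun n => S (u n)) Filter.atTop (nhds 0) :=
    squeeze_zero_norm hSu tendsto_one_div_add_atTop_nhds_zero_nat
  have hlK : l ∈ kerSub S := by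
    rw [mem_kerSub_aux]
    exact graph_closed_aux S hdense hskew (fun n => u (φ n)) l 0 hl (hS0.comp hφ.tendsto_atTop)
  have hlKp : l ∈ (kerSub S)ᗮ :=
    (Submodule.isClosed_orthogonal (kerSub S)).mem_of_tendsto hl
      (Filter.Eventually.of_forall fun n => hu (φ n))
  have hl0 : l = 0 := by
    have := (Submodule.mem_orthogonal _ _).1 hlKp l hlK
    exact inner_self_eq_zero.1 this
  have hl1 : ‖l‖ = 1 := by
    refine tendsto_nhds_unique hl.norm ?_
    simp only [hun]
    exact tendsto_const_nhds
  simp [hl0] at hl1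

/-- if `S` is a densely defined skew-selfadjoint operator on a complex Hilbert
space `H` with compact embedding `dom S ↪ H`, then `S` is Fredholm of index zero: `ran S` is
closed, `ker S` and the cokernel `H ⧸ ran S` are finite-dimensional, and
`dim ker S = dim (H ⧸ ran S)` (equivalently `dim ker S = dim (ran S)ᗮ`). -/
theorem fredholm_index_zero {H : Type*} [NormedAddCommGroup H] [InnerProductSpace ℂ H]
    [CompleteSpace H] (S : H →ₗ.[ℂ] H)
    (hdense : Dense (S.domain : Set H)) (hskew : S.adjoint = -S)
    (hcomp : ∀ (x : ℕ → H) (hx : ∀ n, x n ∈ S.domain),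
      (∃ C, ∀ n, ‖x n‖ ≤ C) → (∃ C, ∀ n, ‖S ⟨x n, hx n⟩‖ ≤ C) →
      ∃ φ : ℕ → ℕ, StrictMono φ ∧
        ∃ l : H, Filter.Tendsto (fun n => x (φ n)) Filter.atTop (nhds l)) :
    IsClosed (ranSub S : Set H) ∧
      FiniteDimensional ℂ (kerSub S) ∧
      FiniteDimensional ℂ (H ⧸ ranSub S) ∧
      Module.finrank ℂ (kerSub S) = Module.finrank ℂ (H ⧸ ranSub S) ∧
      Module.finrank ℂ (kerSub S) = Module.finrank ℂ ((ranSub S)ᗮ) := by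
  have hker := ker_eq_aux S hdense hskew
  have hKcl : IsClosed (kerSub S : Set H) := by
    rw [hker]; exact Submodule.isClosed_orthogonal _
  have hfin : FiniteDimensional ℂ (kerSub S) := by
    refine FiniteDimensional.of_isCompact_closedBall ℂ (r := 1) one_pos (c := 0) ?_
    refine IsSeqCompact.isCompact fun x hx => ?_
    have hx' := fun n => (mem_kerSub_aux S (x n : H)).1 (x n).2
    have hx1 : ∀ n, ‖(x n : H)‖ ≤ 1 := fun n => by
      have := hx n
      rwa [mem_closedBall_zero_iff] at this
    obtain ⟨φ, hφ, l, hl⟩ := hcomp (fun n => (x n : H)) (fun n => (hx' n).1)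
      ⟨1, hx1⟩ ⟨0, fun n => by rw [(hx' n).2, norm_zero]⟩
    have hlK : l ∈ kerSub S :=
      hKcl.mem_of_tendsto hl (Filter.Eventually.of_forall fun n => (x (φ n)).2)
    refine ⟨⟨l, hlK⟩, ?_, φ, hφ, ?_⟩
    · rw [mem_closedBall_zero_iff]
      exact le_of_tendsto hl.norm (Filter.Eventually.of_forall fun n => hx1 (φ n))
    · exact tendsto_subtype_rng.2 hl
  obtain ⟨c, hc, hbound⟩ := bound_aux S hdense hskew hcomp
  have hpre : ∀ y ∈ ranSub S, ∃ x : S.domain, (x : H) ∈ (kerSub S)ᗮ ∧ S x = y := by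
    rintro _ ⟨x, rfl⟩
    obtain ⟨k, hk, z, hz, hkz⟩ := (kerSub S).exists_add_mem_mem_orthogonal (x : H)
    obtain ⟨hkd, hk0⟩ := (mem_kerSub_aux S k).1 hk
    refine ⟨x - ⟨k, hkd⟩, ?_, ?_⟩
    · have : ((x - ⟨k, hkd⟩ : S.domain) : H) = z := by
        simp [hkz]
      rw [this]; exact hz
    · rw [LinearPMap.map_sub, hk0, sub_zero]; rfl
  have hcl : IsClosed (ranSub S : Set H) := by
    refine IsSeqClosed.isClosed fun y w hy hw => ?_
    choose u hu hSu using fun n => hpre (y n) (hy n)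
    have hcau : CauchySeq (fun n => (u n : H)) := by
      rw [Metric.cauchySeq_iff]
      intro ε hε
      obtain ⟨N, hN⟩ := Metric.cauchySeq_iff.1 hw.cauchySeq (ε / c) (by positivity)
      refine ⟨N, fun m hm n hn => ?_⟩
      have h1 := hbound (u m - u n) (Submodule.sub_mem _ (hu m) (hu n))
      have h2 := hN m hm n hn
      rw [LinearPMap.map_sub, hSu, hSu, ← dist_eq_norm] at h1
      rw [lt_div_iff₀ hc] at h2
      rw [dist_eq_norm]
      have h3 : ‖(u m : H) - (u n : H)‖ ≤ c * dist (y m) (y n) := h1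
      linarith
    obtain ⟨x, hx⟩ := cauchySeq_tendsto_of_complete hcau
    obtain ⟨hxd, hxw⟩ := graph_closed_aux S hdense hskew u x w hx (by simpa only [hSu] using hw)
    exact ⟨⟨x, hxd⟩, hxw⟩
  have : CompleteSpace (ranSub S) := hcl.completeSpace_coe
  let e := Submodule.quotientEquivOfIsCompl (ranSub S) (ranSub S)ᗮ
    (Submodule.isCompl_orthogonal_of_hasOrthogonalProjection)
  have hfin' : FiniteDimensional ℂ ((ranSub S)ᗮ : Submodule ℂ H) := by rw [← hker]; exact hfin
  have heq : Module.finrank ℂ (kerSub S) = Module.finrank ℂ ((ranSub S)ᗮ : Submodule ℂ H) := by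
    rw [hker]
  exact ⟨hcl, hfin, Module.Finite.equiv e.symm, heq.trans e.finrank_eq.symm, heq⟩
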